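/- Let (R,B) be an EIC problem with problem graph G, and let β ∈ F_2^{s×m} be a centralized linear broadcast solution to (R,B). Then there exists a matrix A ∈ F_2^{V×m} such that φ_{(R,B)}(A) fits G and every row of A lies in the row span of β; in particular, s ≥ rank_2(A) = rank_2(φ_{(R,B)}(A)) ≥ rminrk_2(G, 𝒜_{(R,B)}). -/

import Mathlib

open Matrix BigOperators

namespace EIC

variable {n m : ℕ}

/-- The vertex set of the problem graph of the EIC problem `(R, B)`:
one vertex for each requirement pair `(u, a)` with `R u a = 1`. -/
abbrev Vtx (R : Matrix (Fin n) (Fin m) (ZMod 2)) : Type :=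
  {p : Fin n × Fin m // R p.1 p.2 = 1}

/-- `(R, B)` have disjoint supports: no position has both `B = 1` and `R = 1`. -/
def DisjointSupports (R B : Matrix (Fin n) (Fin m) (ZMod 2)) : Prop :=
  ∀ u a, ¬(B u a = 1 ∧ R u a = 1)

/-- The standard basis vector `e_a ∈ F_2^m`. -/
def e (m : ℕ) (a : Fin m) : Fin m → ZMod 2 := Pi.single a 1

/-- `β` (with rows indexed by `ι`) is a centralized linear broadcast solution to `(R, B)`:
for every requirement pair `(u, a)` there is `α` with `e_a = α · [β ; diag(B_u)]`. -/
def IsCentralizedSolution (R B : Matrix (Fin n) (Fin m) (ZMod 2))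
    {ι : Type} [Fintype ι] (β : Matrix ι (Fin m) (ZMod 2)) : Prop :=
  ∀ u a, R u a = 1 →
    ∃ α : ι ⊕ Fin m → ZMod 2,
      e m a = α ᵥ* Matrix.fromRows β (Matrix.diagonal (B u))

/-- `(C)_{(R,B)}`: the minimum length of a centralized linear broadcast solution. -/
noncomputable def Copt (R B : Matrix (Fin n) (Fin m) (ZMod 2)) : ℕ :=
  sInf {h | ∃ β : Matrix (Fin h) (Fin m) (ZMod 2), IsCentralizedSolution R B β}

/-- The vertical concatenation of the matrices `β u`, `u ∈ [n]`. -/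
def vconcat {h : Fin n → ℕ} (β : ∀ u : Fin n, Matrix (Fin (h u)) (Fin m) (ZMod 2)) :
    Matrix ((ℓ : Fin n) × Fin (h ℓ)) (Fin m) (ZMod 2) :=
  Matrix.of fun p => β p.1 p.2

/-- `β⁽¹⁾, …, β⁽ⁿ⁾` is a (decentralized) linear broadcast solution to `(R, B)`. -/
def IsBroadcastSolution (R B : Matrix (Fin n) (Fin m) (ZMod 2))
    {h : Fin n → ℕ} (β : ∀ u : Fin n, Matrix (Fin (h u)) (Fin m) (ZMod 2)) : Prop :=
  (∀ u a, B u a = 0 → ∀ i, β u i a = 0) ∧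
  ∀ u a, R u a = 1 →
    ∃ α : ((ℓ : Fin n) × Fin (h ℓ)) ⊕ Fin m → ZMod 2,
      e m a = α ᵥ* Matrix.fromRows (vconcat β) (Matrix.diagonal (B u))

/-- `(D)_{(R,B)}`: the minimum length of a decentralized linear broadcast solution. -/
noncomputable def Dopt (R B : Matrix (Fin n) (Fin m) (ZMod 2)) : ℕ :=
  sInf {s | ∃ (h : Fin n → ℕ) (β : ∀ u : Fin n, Matrix (Fin (h u)) (Fin m) (ZMod 2)),
    IsBroadcastSolution R B β ∧ ∑ u, h u = s}

/-- A task-based solution: a linear broadcast solution where every requirement pair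
`(u, a)` can be decoded from the broadcast of a single responsible sender `ℓ`. -/
def IsTaskBased (R B : Matrix (Fin n) (Fin m) (ZMod 2))
    {h : Fin n → ℕ} (β : ∀ u : Fin n, Matrix (Fin (h u)) (Fin m) (ZMod 2)) : Prop :=
  IsBroadcastSolution R B β ∧
  ∀ u a, R u a = 1 → ∃ ℓ : Fin n, ∃ α : Fin (h ℓ) ⊕ Fin m → ZMod 2,
    e m a = α ᵥ* Matrix.fromRows (β ℓ) (Matrix.diagonal (B u))

/-- `(T)_{(R,B)}`: the minimum length of a task-based solution. -/
noncomputable def Topt (R B : Matrix (Fin n) (Fin m) (ZMod 2)) : ℕ :=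
  sInf {s | ∃ (h : Fin n → ℕ) (β : ∀ u : Fin n, Matrix (Fin (h u)) (Fin m) (ZMod 2)),
    IsTaskBased R B β ∧ ∑ u, h u = s}

/-- The edge relation of the problem graph: for distinct requirement pairs `(u,a)`, `(w,b)`,
there is an edge from `v_{(u,a)}` to `v_{(w,b)}` iff `B u b = 1` or `a = b`. -/
def probEdge (R B : Matrix (Fin n) (Fin m) (ZMod 2)) (v w : Vtx R) : Prop :=
  v ≠ w ∧ (B v.1.1 w.1.2 = 1 ∨ v.1.2 = w.1.2)

/-- A matrix `A` fits a directed graph with edge relation `E`. -/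
def Fits {V : Type} (E : V → V → Prop) (A : Matrix V V (ZMod 2)) : Prop :=
  (∀ k, A k k = 1) ∧ ∀ k l, k ≠ l → ¬ E k l → A k l = 0

/-- `minrk₂`: the minimum `F₂`-rank of a matrix fitting the graph. -/
noncomputable def minrk {V : Type} [Fintype V] (E : V → V → Prop) : ℕ :=
  sInf {r | ∃ A : Matrix V V (ZMod 2), Fits E A ∧ A.rank = r}

/-- `rminrk₂`: the minimum `F₂`-rank of a matrix in `𝒜` fitting the graph. -/
noncomputable def rminrk {V : Type} [Fintype V] (E : V → V → Prop)
    (𝒜 : Set (Matrix V V (ZMod 2))) : ℕ :=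
  sInf {r | ∃ A ∈ 𝒜, Fits E A ∧ A.rank = r}

/-- The column repetition function `φ_{(R,B)}`: the column of `φ(A)` indexed by
`v_{(u,a)}` is the `a`-th column of `A`. -/
def phi (R : Matrix (Fin n) (Fin m) (ZMod 2))
    (A : Matrix (Vtx R) (Fin m) (ZMod 2)) : Matrix (Vtx R) (Vtx R) (ZMod 2) :=
  Matrix.of fun k v => A k v.1.2

/-- The sender neighborhood `N_u = {v_{(w,b)} ∈ V : B u b = 1}`. -/
def senderNbhd (R B : Matrix (Fin n) (Fin m) (ZMod 2)) (u : Fin n) : Set (Vtx R) :=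
  {v | B u v.1.2 = 1}

/-- A neighborhood partition `{Ñ_1, …, Ñ_n}`. -/
def IsNbhdPartition (R B : Matrix (Fin n) (Fin m) (ZMod 2))
    (N : Fin n → Set (Vtx R)) : Prop :=
  (∀ i, N i ⊆ senderNbhd R B i) ∧
  (∀ i j, i ≠ j → Disjoint (N i) (N j)) ∧
  (⋃ i, N i) = Set.univ

open Classical in
/-- `R^(i)`: the request matrix of the EIC subproblem induced by `Ñ_i`; it has ones
exactly at the requirement pairs whose vertex lies in `Ñ_i`. -/
noncomputable def Rsub (R : Matrix (Fin n) (Fin m) (ZMod 2))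
    (N : Fin n → Set (Vtx R)) (i : Fin n) : Matrix (Fin n) (Fin m) (ZMod 2) :=
  Matrix.of fun u a =>
    if hr : R u a = 1 then (if (⟨(u, a), hr⟩ : Vtx R) ∈ N i then 1 else 0) else 0

open Classical in
/-- `B^(i)`: the has-matrix of the EIC subproblem induced by `Ñ_i`; it agrees with `B`
on the columns of blocks requested in `Ñ_i` and is zero elsewhere. -/
noncomputable def Bsub (R B : Matrix (Fin n) (Fin m) (ZMod 2))
    (N : Fin n → Set (Vtx R)) (i : Fin n) : Matrix (Fin n) (Fin m) (ZMod 2) :=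
  Matrix.of fun u a => if ∃ v ∈ N i, v.1.2 = a then B u a else 0

/-- `Cl` is a clique for the edge relation `E`. -/
def IsClique {V : Type} (E : V → V → Prop) (Cl : Set V) : Prop :=
  ∀ k ∈ Cl, ∀ l ∈ Cl, k ≠ l → E k l

/-- `I` is an independent set for the edge relation `E` (no edge in either direction). -/
def IsIndep {V : Type} (E : V → V → Prop) (I : Set V) : Prop :=
  ∀ k ∈ I, ∀ l ∈ I, k ≠ l → ¬ E k l ∧ ¬ E l k

/-- `χ(Ḡ|_S)`: the minimum number of cliques of the induced subgraph `G|_S`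
needed to partition `S`. -/
noncomputable def cliqueCoverNum {V : Type} (E : V → V → Prop) (S : Set V) : ℕ :=
  sInf {t | ∃ Cl : Fin t → Set V, (∀ i, Cl i ⊆ S) ∧ (∀ i, IsClique E (Cl i)) ∧
    (∀ i j, i ≠ j → Disjoint (Cl i) (Cl j)) ∧ (⋃ i, Cl i) = S}

/-- `χ(G)`: the minimum number of independent sets of `G` needed to partition
its vertex set. -/
noncomputable def chromNum {V : Type} [Fintype V] (E : V → V → Prop) : ℕ :=
  sInf {t | ∃ I : Fin t → Set V, (∀ i, IsIndep E (I i)) ∧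
    (∀ i j, i ≠ j → Disjoint (I i) (I j)) ∧ (⋃ i, I i) = Set.univ}

/-- `ω(Ḡ|_S)`: the maximum size of an independent set of the induced subgraph `G|_S`. -/
noncomputable def indepNum {V : Type} (E : V → V → Prop) (S : Set V) : ℕ :=
  sSup {t | ∃ I ⊆ S, IsIndep E I ∧ I.ncard = t}

/-- The set of neighborhood-cliques: vertex sets of maximal cliques of the induced
subgraphs `G|_{N_i}`, over all senders `i`. -/
def nbhdCliques (R B : Matrix (Fin n) (Fin m) (ZMod 2)) : Set (Set (Vtx R)) :=
  {Cl | ∃ i : Fin n, Cl ⊆ senderNbhd R B i ∧ IsClique (probEdge R B) Cl ∧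
    ∀ Cl', Cl ⊆ Cl' → Cl' ⊆ senderNbhd R B i → IsClique (probEdge R B) Cl' → Cl' = Cl}

/-!
Decoding the pair `(u, a)` writes `e_a` as a combination of the rows of `β` plus a vector supported
on the blocks that `u` has, so stacking these combinations into a matrix `D` makes `φ(D β)` fit the
problem graph. But passing from `D β` to `φ(D β)` forgets the columns of blocks nobody requests and
may therefore lower the rank. To repair this, let `γ` consist of the requested columns of `β`, so
that `φ(D β) = D γ`, and choose a generalized inverse `X`, meaning `γ X γ = γ`. Replacing `D` by
`D γ X` leaves `φ` unchanged, since `D γ X γ = D γ`, while `D γ X β` now factors through `D γ`,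
which bounds its rank by that of its image under `φ`.
-/

theorem exists_comp_comp_eq_self {K V W : Type*} [DivisionRing K] [AddCommGroup V] [Module K V]
    [AddCommGroup W] [Module K W] (f : V →ₗ[K] W) : ∃ g : W →ₗ[K] V, f ∘ₗ g ∘ₗ f = f := by
  obtain ⟨σ, hσ⟩ := f.rangeRestrict.exists_rightInverse_of_surjective f.range_rangeRestrict
  obtain ⟨g, hg⟩ := σ.exists_extend
  refine ⟨g, LinearMap.ext fun x => ?_⟩
  calc f (g (f x)) = f (σ (f.rangeRestrict x)) := congr(f ($hg (f.rangeRestrict x)))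
    _ = f x := congr(($hσ (f.rangeRestrict x)).val)

theorem exists_mul_mul_eq_self {K ι κ : Type*} [DivisionRing K] [Fintype ι] [Fintype κ]
    (M : Matrix ι κ K) : ∃ X : Matrix κ ι K, M * X * M = M := by
  classical
  obtain ⟨g, hg⟩ := exists_comp_comp_eq_self (Matrix.toLinearMapRight' M)
  refine ⟨LinearMap.toMatrixRight' g, Matrix.toLinearMapRight'.injective ?_⟩
  rw [Matrix.toLinearMapRight'_mul, Matrix.toLinearMapRight'_mul, Matrix.toLinearMapRight',
    LinearEquiv.symm_apply_apply]
  exact hg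

theorem exists_mul_rank_eq_rank_submatrix {K ι κ ν τ : Type*} [Field K] [Fintype ι] [Fintype κ]
    [Fintype ν] (D : Matrix τ ι K) (β : Matrix ι κ K) (c : ν → κ) :
    ∃ D' : Matrix τ ι K, (D' * β).submatrix id c = (D * β).submatrix id c ∧
      (D' * β).rank = ((D * β).submatrix id c).rank := by
  set γ := β.submatrix id c
  obtain ⟨X, hX⟩ := exists_mul_mul_eq_self γ
  have hsub (E : Matrix τ ι K) : (E * β).submatrix id c = E * γ := rfl
  have hγ : D * γ * X * γ = D * γ := by
    rw [Matrix.mul_assoc D, Matrix.mul_assoc D, hX]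
  refine ⟨D * γ * X, by rw [hsub, hsub, hγ], le_antisymm ?_ ?_⟩
  · calc (D * γ * X * β).rank = (D * γ * (X * β)).rank := by rw [Matrix.mul_assoc]
      _ ≤ (D * γ).rank := Matrix.rank_mul_le_left _ _
  · calc (D * γ).rank = ((D * γ * X * β).submatrix id c).rank := by rw [hsub, hγ]
      _ ≤ (D * γ * X * β).rank := Matrix.rank_submatrix_le _ _ _

theorem mul_row_mem_span_range_row {S τ ι κ : Type*} [Semiring S] [Fintype ι]
    (D : Matrix τ ι S) (β : Matrix ι κ S) (t : τ) :
    (D * β) t ∈ Submodule.span S (Set.range β.row) := by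
  rw [← range_vecMulLinear, Matrix.mul_apply_eq_vecMul]
  exact LinearMap.mem_range_self β.vecMulLinear (D t)

theorem rminrk_le_rank {V : Type} [Fintype V] {E : V → V → Prop} {𝒜 : Set (Matrix V V (ZMod 2))}
    {A : Matrix V V (ZMod 2)} (hA : A ∈ 𝒜) (hfits : Fits E A) : rminrk E 𝒜 ≤ A.rank :=
  Nat.sInf_le ⟨A, hA, hfits, rfl⟩

section Decoding

variable {R B : Matrix (Fin n) (Fin m) (ZMod 2)}

theorem fits_phi_of_eq_e_of_ne_one (hdisj : DisjointSupports R B)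
    {A : Matrix (Vtx R) (Fin m) (ZMod 2)}
    (hA : ∀ v b, B v.1.1 b ≠ 1 → A v b = e m v.1.2 b) : Fits (probEdge R B) (phi R A) := by
  refine ⟨fun v => ?_, fun v w hvw hE => ?_⟩
  · have hB : B v.1.1 v.1.2 ≠ 1 := fun h => hdisj _ _ ⟨h, v.2⟩
    exact (hA v v.1.2 hB).trans (Pi.single_eq_same _ _)
  · have hB : B v.1.1 w.1.2 ≠ 1 := fun h => hE ⟨hvw, Or.inl h⟩
    have hne : w.1.2 ≠ v.1.2 := fun h => hE ⟨hvw, Or.inr h.symm⟩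
    exact (hA v w.1.2 hB).trans (Pi.single_eq_of_ne hne _)

variable {ι : Type} [Fintype ι] {β : Matrix ι (Fin m) (ZMod 2)}

theorem IsCentralizedSolution.exists_vecMul_eq_e_of_ne_one (hsol : IsCentralizedSolution R B β)
    (v : Vtx R) : ∃ d : ι → ZMod 2, ∀ b, B v.1.1 b ≠ 1 → (d ᵥ* β) b = e m v.1.2 b := by
  obtain ⟨α, hα⟩ := hsol v.1.1 v.1.2 v.2
  refine ⟨α ∘ Sum.inl, fun b hb => ?_⟩
  have hB : B v.1.1 b = 0 := not_not.mp (mt (Fin.eq_one_of_ne_zero _) hb)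
  rw [hα, Matrix.vecMul_fromRows, Pi.add_apply, Matrix.vecMul_diagonal, hB, mul_zero, add_zero]

theorem IsCentralizedSolution.exists_fits_phi_mul (hdisj : DisjointSupports R B)
    (hsol : IsCentralizedSolution R B β) :
    ∃ D : Matrix (Vtx R) ι (ZMod 2), Fits (probEdge R B) (phi R (D * β)) := by
  choose D hD using hsol.exists_vecMul_eq_e_of_ne_one
  exact ⟨D, fits_phi_of_eq_e_of_ne_one hdisj hD⟩

end Decoding

theorem centralized_solution_gives_fitting_matrix {n m : ℕ}
    (R B : Matrix (Fin n) (Fin m) (ZMod 2)) (hdisj : DisjointSupports R B)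
    {s : ℕ} (β : Matrix (Fin s) (Fin m) (ZMod 2))
    (hsol : IsCentralizedSolution R B β) :
    ∃ A : Matrix (Vtx R) (Fin m) (ZMod 2),
      Fits (probEdge R B) (phi R A) ∧
      (∀ v, A v ∈ Submodule.span (ZMod 2) (Set.range fun i => β i)) ∧
      A.rank ≤ s ∧ A.rank = (phi R A).rank ∧
      rminrk (probEdge R B) (Set.range (phi R)) ≤ (phi R A).rank := by
  obtain ⟨D, hD⟩ := hsol.exists_fits_phi_mul hdisj
  obtain ⟨D', hphi, hrank⟩ : ∃ D' : Matrix (Vtx R) (Fin s) (ZMod 2),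
      phi R (D' * β) = phi R (D * β) ∧ (D' * β).rank = (phi R (D * β)).rank :=
    exists_mul_rank_eq_rank_submatrix D β fun v : Vtx R => v.1.2
  rw [← hphi] at hD hrank
  exact ⟨D' * β, hD, mul_row_mem_span_range_row D' β,
    (Matrix.rank_mul_le_right D' β).trans β.rank_le_height, hrank,
    rminrk_le_rank (Set.mem_range_self _) hD⟩

end EIC
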